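/- There exists a strict MMDRR(6) (a CMDRR(6,0)) whose 18 games can be partitioned into 9 rounds of 2 games each, such that each player plays in at most one game per round and each player has exactly 3 byes (rounds in which the player does not play). -/

import Mathlib

open scoped Classical

/-- A mixed doubles game: an unordered pair of teams, each team being a
(man, woman) pair, for `n` men and `n` women indexed by `Fin n`. -/
abbrev Game (n : ℕ) := Sym2 (Fin n × Fin n)

/-- A game is valid if its two teams have distinct men and distinct women. -/
def Game.valid {n : ℕ} (g : Game n) : Prop :=
  ∃ a b : Fin n × Fin n, g = s(a, b) ∧ a.1 ≠ b.1 ∧ a.2 ≠ b.2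

/-- Man `m` plays in game `g`. -/
def Game.manIn {n : ℕ} (m : Fin n) (g : Game n) : Prop :=
  ∃ a b : Fin n × Fin n, g = s(a, b) ∧ a.1 = m

/-- Woman `w` plays in game `g`. -/
def Game.womanIn {n : ℕ} (w : Fin n) (g : Game n) : Prop :=
  ∃ a b : Fin n × Fin n, g = s(a, b) ∧ a.2 = w

/-- Man `m` and woman `w` are partners (teammates) in game `g`. -/
def Game.partners {n : ℕ} (m w : Fin n) (g : Game n) : Prop :=
  (m, w) ∈ g

/-- Man `m` and woman `w` are opponents in game `g` (on different teams). -/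
def Game.opposesMW {n : ℕ} (m w : Fin n) (g : Game n) : Prop :=
  ∃ a b : Fin n × Fin n, g = s(a, b) ∧ a.1 = m ∧ b.2 = w

/-- Men `m` and `m'` are opponents in game `g`. -/
def Game.opposesMM {n : ℕ} (m m' : Fin n) (g : Game n) : Prop :=
  ∃ a b : Fin n × Fin n, g = s(a, b) ∧ a.1 = m ∧ b.1 = m'

/-- Women `w` and `w'` are opponents in game `g`. -/
def Game.opposesWW {n : ℕ} (w w' : Fin n) (g : Game n) : Prop :=
  ∃ a b : Fin n × Fin n, g = s(a, b) ∧ a.2 = w ∧ b.2 = w'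

/-- A complete mixed doubles round robin tournament CMDRR(n,k). -/
structure CMDRR (n k : ℕ) where
  /-- The spouse pairs (man, woman). -/
  spouses : Finset (Fin n × Fin n)
  spouses_card : spouses.card = k
  spouses_inj1 : ∀ p ∈ spouses, ∀ q ∈ spouses, p.1 = q.1 → p = q
  spouses_inj2 : ∀ p ∈ spouses, ∀ q ∈ spouses, p.2 = q.2 → p = q
  /-- The multiset of games. -/
  games : Multiset (Game n)
  valid : ∀ g ∈ games, g.valid
  /-- (i) no game contains both members of a spouse pair. -/
  no_spouse_game : ∀ g ∈ games, ∀ p ∈ spouses, ¬ (Game.manIn p.1 g ∧ Game.womanIn p.2 g)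
  /-- (ii) every non-spouse man-woman pair partners exactly once ... -/
  partners_once : ∀ m w : Fin n, (m, w) ∉ spouses →
    games.countP (Game.partners m w) = 1
  /-- ... and opposes exactly once. -/
  opposesMW_once : ∀ m w : Fin n, (m, w) ∉ spouses →
    games.countP (Game.opposesMW m w) = 1
  /-- (iii) a spoused man opposes every other man exactly once. -/
  spousedM_opposes : ∀ m ∈ spouses.image Prod.fst, ∀ m' : Fin n, m' ≠ m →
    games.countP (Game.opposesMM m m') = 1
  /-- (iii) a spoused woman opposes every other woman exactly once. -/
  spousedW_opposes : ∀ w ∈ spouses.image Prod.snd, ∀ w' : Fin n, w' ≠ w →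
    games.countP (Game.opposesWW w w') = 1
  /-- (iv) an unspoused man opposes exactly one other unspoused man exactly twice,
  and all other men exactly once. -/
  unspousedM_opposes : ∀ m : Fin n, m ∉ spouses.image Prod.fst →
    ∃ m' : Fin n, m' ≠ m ∧ m' ∉ spouses.image Prod.fst ∧
      games.countP (Game.opposesMM m m') = 2 ∧
      ∀ m'' : Fin n, m'' ≠ m → m'' ≠ m' → games.countP (Game.opposesMM m m'') = 1
  /-- (iv) likewise for unspoused women. -/
  unspousedW_opposes : ∀ w : Fin n, w ∉ spouses.image Prod.snd →
    ∃ w' : Fin n, w' ≠ w ∧ w' ∉ spouses.image Prod.snd ∧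
      games.countP (Game.opposesWW w w') = 2 ∧
      ∀ w'' : Fin n, w'' ≠ w → w'' ≠ w' → games.countP (Game.opposesWW w w'') = 1

/-- A round: a multiset of games in which each player appears at most once. -/
def IsRound {n : ℕ} (r : Multiset (Game n)) : Prop :=
  (∀ m : Fin n, r.countP (Game.manIn m) ≤ 1) ∧
  (∀ w : Fin n, r.countP (Game.womanIn w) ≤ 1)

/-- A full round: all players play if `n` is even; all but exactly one man and
one woman play if `n` is odd. -/
def FullRound {n : ℕ} (r : Multiset (Game n)) : Prop :=
  IsRound r ∧
  ((Even n ∧ (∀ m : Fin n, r.countP (Game.manIn m) = 1) ∧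
      (∀ w : Fin n, r.countP (Game.womanIn w) = 1)) ∨
   (¬ Even n ∧ (∃! m : Fin n, r.countP (Game.manIn m) = 0) ∧
      (∃! w : Fin n, r.countP (Game.womanIn w) = 0)))

abbrev PT := (Fin 6 × Fin 6) × (Fin 6 × Fin 6)

def PT.mk (x : PT) : Game 6 := s(x.1, x.2)

def toG (L : List PT) : Multiset (Game 6) := ((L.map PT.mk : List (Game 6)) : Multiset (Game 6))

def RR : List (List PT) :=
  [[((0, 4), (5, 2)), ((1, 3), (4, 5))],
  [((0, 5), (3, 1)), ((2, 0), (5, 3))],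
  [((0, 0), (2, 5)), ((3, 3), (5, 1))],
  [((4, 1), (5, 0)), ((2, 3), (3, 2))],
  [((2, 4), (3, 5)), ((0, 1), (1, 0))],
  [((0, 3), (1, 4)), ((4, 2), (5, 5))],
  [((1, 2), (3, 0)), ((2, 1), (4, 4))],
  [((1, 1), (2, 2)), ((3, 4), (4, 0))],
  [((0, 2), (4, 3)), ((1, 5), (5, 4))]]

theorem cnt (L : List PT) (p : Game 6 → Prop) [DecidablePred p] (q : PT → Bool)
    (h : ∀ x, p (PT.mk x) ↔ q x = true) : Multiset.countP p (toG L) = L.countP q := by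
  unfold toG
  rw [Multiset.coe_countP, List.countP_map]
  apply List.countP_congr
  intro x _
  simp [h]

def qMan (m : Fin 6) (x : PT) : Bool := x.1.1 == m || x.2.1 == m
def qWoman (m : Fin 6) (x : PT) : Bool := x.1.2 == m || x.2.2 == m
def qPart (m w : Fin 6) (x : PT) : Bool :=
  (x.1.1 == m && x.1.2 == w) || (x.2.1 == m && x.2.2 == w)
def qMW (m w : Fin 6) (x : PT) : Bool :=
  (x.1.1 == m && x.2.2 == w) || (x.2.1 == m && x.1.2 == w)
def qMM (m w : Fin 6) (x : PT) : Bool :=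
  (x.1.1 == m && x.2.1 == w) || (x.2.1 == m && x.1.1 == w)
def qWW (m w : Fin 6) (x : PT) : Bool :=
  (x.1.2 == m && x.2.2 == w) || (x.2.2 == m && x.1.2 == w)

theorem ex_iff (x : PT) (Q : Fin 6 × Fin 6 → Fin 6 × Fin 6 → Prop) :
    (∃ a b, PT.mk x = s(a, b) ∧ Q a b) ↔ Q x.1 x.2 ∨ Q x.2 x.1 := by
  constructor
  · rintro ⟨a, b, h, hq⟩
    rw [PT.mk, Sym2.eq_iff] at h
    rcases h with ⟨h1, h2⟩ | ⟨h1, h2⟩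
    · left; rwa [h1, h2]
    · right; rwa [h1, h2]
  · rintro (h | h)
    · exact ⟨_, _, rfl, h⟩
    · exact ⟨_, _, Sym2.eq_swap, h⟩

theorem cMan (L : List PT) (m : Fin 6) [DecidablePred (Game.manIn m)] :
    Multiset.countP (Game.manIn m) (toG L) = L.countP (qMan m) :=
  cnt _ _ _ fun x => (ex_iff x fun a _ => a.1 = m).trans (by simp [qMan])
theorem cWoman (L : List PT) (m : Fin 6) [DecidablePred (Game.womanIn m)] :
    Multiset.countP (Game.womanIn m) (toG L) = L.countP (qWoman m) :=
  cnt _ _ _ fun x => (ex_iff x fun a _ => a.2 = m).trans (by simp [qWoman])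
theorem cMW (L : List PT) (m w : Fin 6) [DecidablePred (Game.opposesMW m w)] :
    Multiset.countP (Game.opposesMW m w) (toG L) = L.countP (qMW m w) :=
  cnt _ _ _ fun x => (ex_iff x fun a b => a.1 = m ∧ b.2 = w).trans (by simp [qMW])
theorem cMM (L : List PT) (m w : Fin 6) [DecidablePred (Game.opposesMM m w)] :
    Multiset.countP (Game.opposesMM m w) (toG L) = L.countP (qMM m w) :=
  cnt _ _ _ fun x => (ex_iff x fun a b => a.1 = m ∧ b.1 = w).trans (by simp [qMM])
theorem cWW (L : List PT) (m w : Fin 6) [DecidablePred (Game.opposesWW m w)] :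
    Multiset.countP (Game.opposesWW m w) (toG L) = L.countP (qWW m w) :=
  cnt _ _ _ fun x => (ex_iff x fun a b => a.2 = m ∧ b.2 = w).trans (by simp [qWW])
theorem cPart (L : List PT) (m w : Fin 6) [DecidablePred (Game.partners m w)] :
    Multiset.countP (Game.partners m w) (toG L) = L.countP (qPart m w) :=
  cnt _ _ _ fun x => by
    simp only [qPart, Game.partners, PT.mk, Sym2.mem_iff, Prod.ext_iff, Bool.or_eq_true, Bool.and_eq_true, beq_iff_eq, eq_comm (a := m), eq_comm (a := w)]

def sw : Fin 6 → Fin 6 := ![1, 0, 3, 2, 5, 4]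

set_option maxRecDepth 100000

def TT : CMDRR 6 0 where
  spouses := ∅
  spouses_card := rfl
  spouses_inj1 := by simp
  spouses_inj2 := by simp
  games := toG RR.flatten
  valid := by
    intro g hg
    obtain ⟨x, hx, rfl⟩ := List.mem_map.1 (Multiset.mem_coe.1 hg)
    have h : ∀ x ∈ RR.flatten, x.1.1 ≠ x.2.1 ∧ x.1.2 ≠ x.2.2 := by decide
    exact ⟨_, _, rfl, h x hx⟩
  no_spouse_game := by simp
  partners_once := by
    intro m w _
    rw [cPart]; revert m w; decide
  opposesMW_once := by
    intro m w _
    rw [cMW]; revert m w; decide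
  spousedM_opposes := by simp
  spousedW_opposes := by simp
  unspousedM_opposes := by
    intro m _
    refine ⟨sw m, ?_, by simp, ?_⟩
    · revert m; decide
    · simp only [cMM]; revert m; decide
  unspousedW_opposes := by
    intro m _
    refine ⟨sw m, ?_, by simp, ?_⟩
    · revert m; decide
    · simp only [cWW]; revert m; decide

theorem byes (q : PT → Bool) (p : Game 6 → Prop) [DecidablePred p]
    [DecidablePred fun r : Multiset (Game 6) => r.countP p = 0]
    (h : ∀ L, Multiset.countP p (toG L) = L.countP q) :
    Multiset.countP (fun r => r.countP p = 0)
      ((RR.map toG : List (Multiset (Game 6))) : Multiset (Multiset (Game 6))) =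
    RR.countP (fun r => r.countP q == 0) := by
  rw [Multiset.coe_countP, List.countP_map]
  apply List.countP_congr
  intro x _
  simp only [Function.comp, decide_eq_true_eq, h, beq_iff_eq]

/-- There is a strict MMDRR(6) whose 18 games split into 9 rounds of 2 games
each, with every player having exactly 3 byes. -/
theorem cmdrr_6_0_resolution :
    ∃ T : CMDRR 6 0, ∃ rounds : Multiset (Multiset (Game 6)),
      rounds.sum = T.games ∧ Multiset.card rounds = 9 ∧
      (∀ r ∈ rounds, IsRound r ∧ Multiset.card r = 2) ∧
      (∀ m : Fin 6,
        rounds.countP (fun r => r.countP (Game.manIn m) = 0) = 3) ∧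
      (∀ w : Fin 6,
        rounds.countP (fun r => r.countP (Game.womanIn w) = 0) = 3) := by
  refine ⟨TT, ((RR.map toG : List (Multiset (Game 6))) : Multiset (Multiset (Game 6))),
    ?_, rfl, ?_, ?_, ?_⟩
  · rfl
  · intro r hr
    obtain ⟨L, hL, rfl⟩ := List.mem_map.1 (Multiset.mem_coe.1 hr)
    refine ⟨⟨?_, ?_⟩, ?_⟩
    · intro m
      rw [cMan]
      have h : ∀ L ∈ RR, ∀ m, L.countP (qMan m) ≤ 1 := by decide
      exact h L hL m
    · intro m
      have h : ∀ L ∈ RR, ∀ m, L.countP (qWoman m) ≤ 1 := by decide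
      rw [cWoman]; exact h L hL m
    · have h : ∀ L ∈ RR, L.length = 2 := by decide
      simpa [toG] using h L hL
  · intro m
    rw [byes (qMan m) _ (fun L => cMan L m)]
    revert m; decide
  · intro m
    rw [byes (qWoman m) _ (fun L => cWoman L m)]
    revert m; decide
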